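/- Let (⊙, ⟨-,-⟩, ⦅-,-⦆) be a two-variable adjunction on 𝔸, 𝕊, 𝔹, where 𝔹 has pushouts, 𝔸 and 𝕊 have pullbacks, and 𝔸 is cocomplete. Let (E, M) be a weak factorization system on 𝔹, and let 𝒜, 𝒮 be classes of morphisms in 𝔸 and 𝕊 respectively. If the Leibniz tensor f ⋄ u belongs to E for every f ∈ 𝒜 and u ∈ 𝒮, then f ⋄ u belongs to E for every f in the saturated closure 𝒜ˢ and every u ∈ 𝒮 (saturating only the first class). -/

import Mathlib

/-!
The tensor–hom adjunction turns a lifting problem of `f ⋄ u` against `m` into a lifting problem of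
`f` against the Leibniz hom `⟪u, m⟫` (`THC.hasLiftingProperty_leibnizTensor_iff`). Since `E` is
the class of morphisms with the left lifting property against `M`, for a fixed `u` the class of
all `f` with `f ⋄ u ∈ E` is the class of morphisms with the left lifting property against the
maps `⟪u, m⟫`, `m ∈ M`. Any such class is saturated (`isSaturated_llp`), so once it
contains `𝒜` it contains the saturated closure of `𝒜`.
-/

open CategoryTheory Category Limits Opposite

universe v₁ v₂ v₃ u₁ u₂ u₃

/-- A two-variable adjunction (`THC` situation) on categories `𝔸`, `𝕊`, `𝔹`:
functors `⊙ : 𝔸 × 𝕊 ⥤ 𝔹`, `⟨-,-⟩ : 𝕊ᵒᵖ × 𝔹 ⥤ 𝔸`, `⦅-,-⦆ : 𝔸ᵒᵖ × 𝔹 ⥤ 𝕊` (in curried form),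
together with bijections `𝔹(a ⊙ s, b) ≅ 𝔸(a, ⟨s,b⟩) ≅ 𝕊(s, ⦅a,b⦆)` natural in `a`, `s`, `b`. -/
structure THC (𝔸 : Type u₁) (𝕊 : Type u₂) (𝔹 : Type u₃)
    [Category.{v₁} 𝔸] [Category.{v₂} 𝕊] [Category.{v₃} 𝔹] where
  tensor : 𝔸 ⥤ 𝕊 ⥤ 𝔹
  hom : 𝕊ᵒᵖ ⥤ 𝔹 ⥤ 𝔸
  cotensor : 𝔸ᵒᵖ ⥤ 𝔹 ⥤ 𝕊
  homEquiv : ∀ (a : 𝔸) (s : 𝕊) (b : 𝔹),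
    ((tensor.obj a).obj s ⟶ b) ≃ (a ⟶ (hom.obj (op s)).obj b)
  cotensorEquiv : ∀ (a : 𝔸) (s : 𝕊) (b : 𝔹),
    ((tensor.obj a).obj s ⟶ b) ≃ (s ⟶ (cotensor.obj (op a)).obj b)
  homEquiv_naturality_left : ∀ {a a' : 𝔸} (h : a' ⟶ a) (s : 𝕊) (b : 𝔹)
    (φ : (tensor.obj a).obj s ⟶ b),
    homEquiv a' s b ((tensor.map h).app s ≫ φ) = h ≫ homEquiv a s b φ
  homEquiv_naturality_mid : ∀ (a : 𝔸) {s s' : 𝕊} (w : s ⟶ s') (b : 𝔹)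
    (φ : (tensor.obj a).obj s' ⟶ b),
    homEquiv a s b ((tensor.obj a).map w ≫ φ) = homEquiv a s' b φ ≫ (hom.map w.op).app b
  homEquiv_naturality_right : ∀ (a : 𝔸) (s : 𝕊) {b b' : 𝔹} (k : b ⟶ b')
    (φ : (tensor.obj a).obj s ⟶ b),
    homEquiv a s b' (φ ≫ k) = homEquiv a s b φ ≫ (hom.obj (op s)).map k
  cotensorEquiv_naturality_left : ∀ {a a' : 𝔸} (h : a' ⟶ a) (s : 𝕊) (b : 𝔹)
    (φ : (tensor.obj a).obj s ⟶ b),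
    cotensorEquiv a' s b ((tensor.map h).app s ≫ φ) =
      cotensorEquiv a s b φ ≫ (cotensor.map h.op).app b
  cotensorEquiv_naturality_mid : ∀ (a : 𝔸) {s s' : 𝕊} (w : s ⟶ s') (b : 𝔹)
    (φ : (tensor.obj a).obj s' ⟶ b),
    cotensorEquiv a s b ((tensor.obj a).map w ≫ φ) = w ≫ cotensorEquiv a s' b φ
  cotensorEquiv_naturality_right : ∀ (a : 𝔸) (s : 𝕊) {b b' : 𝔹} (k : b ⟶ b')
    (φ : (tensor.obj a).obj s ⟶ b),
    cotensorEquiv a s b' (φ ≫ k) = cotensorEquiv a s b φ ≫ (cotensor.obj (op a)).map k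

namespace THC

variable {𝔸 : Type u₁} {𝕊 : Type u₂} {𝔹 : Type u₃}
  [Category.{v₁} 𝔸] [Category.{v₂} 𝕊] [Category.{v₃} 𝔹]

/-- The Leibniz tensor (pushout-product) `f ⋄ u : (B ⊙ L) ⊔_{A⊙L} (A ⊙ K) ⟶ B ⊙ K`. -/
noncomputable def leibnizTensor (T : THC 𝔸 𝕊 𝔹) [HasPushouts 𝔹]
    {A B : 𝔸} (f : A ⟶ B) {L K : 𝕊} (u : L ⟶ K) :
    pushout ((T.tensor.map f).app L) ((T.tensor.obj A).map u) ⟶ (T.tensor.obj B).obj K :=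
  pushout.desc ((T.tensor.obj B).map u) ((T.tensor.map f).app K)
    ((T.tensor.map f).naturality u).symm

/-- The Leibniz hom `⟪u,g⟫ : ⟨K,X⟩ ⟶ ⟨L,X⟩ ×_{⟨L,Y⟩} ⟨K,Y⟩`. -/
noncomputable def leibnizHom (T : THC 𝔸 𝕊 𝔹) [HasPullbacks 𝔸]
    {L K : 𝕊} (u : L ⟶ K) {X Y : 𝔹} (g : X ⟶ Y) :
    (T.hom.obj (op K)).obj X ⟶
      pullback ((T.hom.obj (op L)).map g) ((T.hom.map u.op).app Y) :=
  pullback.lift ((T.hom.map u.op).app X) ((T.hom.obj (op K)).map g)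
    ((T.hom.map u.op).naturality g).symm

/-- The Leibniz cotensor `⦅f,g⦆ : ⦅B,X⦆ ⟶ ⦅A,X⦆ ×_{⦅A,Y⦆} ⦅B,Y⦆`. -/
noncomputable def leibnizCotensor (T : THC 𝔸 𝕊 𝔹) [HasPullbacks 𝕊]
    {A B : 𝔸} (f : A ⟶ B) {X Y : 𝔹} (g : X ⟶ Y) :
    (T.cotensor.obj (op B)).obj X ⟶
      pullback ((T.cotensor.obj (op A)).map g) ((T.cotensor.map f.op).app Y) :=
  pullback.lift ((T.cotensor.map f.op).app X) ((T.cotensor.obj (op B)).map g)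
    ((T.cotensor.map f.op).naturality g).symm

end THC
section Saturation

open CategoryTheory Category Limits

universe w v u

variable {C : Type u} [Category.{v} C]

/-- `f` is a retract of `g` in the arrow category: there are morphisms `i, r` between the
sources and `j, s` between the targets, commuting with `f` and `g`, with `i ≫ r = 𝟙` and
`j ≫ s = 𝟙`. -/
def IsRetractOfArrow {X Y Z W : C} (f : X ⟶ Y) (g : Z ⟶ W) : Prop :=
  ∃ (i : X ⟶ Z) (r : Z ⟶ X) (j : Y ⟶ W) (s : W ⟶ Y),
    i ≫ r = 𝟙 X ∧ j ≫ s = 𝟙 Y ∧ i ≫ g = f ≫ j ∧ g ≫ s = r ≫ f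

/-- The inclusion functor `Set.Iio j ⥤ J`. -/
def iioInclusion {J : Type w} [Preorder J] (j : J) : Set.Iio j ⥤ J :=
  Monotone.functor (f := fun i => (i : J)) (fun _ _ h => h)

/-- The cocone on the restriction of `F : J ⥤ C` to `Set.Iio j` whose point is `F.obj j`;
asking this cocone to be colimiting expresses that `F` is continuous at `j`. -/
@[simps]
def coconeAt {J : Type w} [Preorder J] (F : J ⥤ C) (j : J) :
    Cocone (iioInclusion j ⋙ F) where
  pt := F.obj j
  ι :=
    { app := fun i => F.map (homOfLE i.2.le)
      naturality := fun i i' h => by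
        dsimp [iioInclusion]
        rw [Category.comp_id, ← F.map_comp]
        rfl }

/-- A class of morphisms `W` is closed under transfinite composition if for every
well-ordered type `J` (with bottom element), every functor `F : J ⥤ C` which is
continuous at every limit element of `J` and sends every successor step into `W`,
and every colimit cocone on `F`, the transfinite composite `F.obj ⊥ ⟶ c.pt` lies
in `W`. -/
def ClosedUnderTransfiniteComposition (W : MorphismProperty C) : Prop :=
  ∀ (J : Type w) (_ : LinearOrder J) (_ : SuccOrder J) (_ : OrderBot J)
    (_ : WellFoundedLT J) (F : J ⥤ C) (c : Cocone F) (_ : IsColimit c),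
    (∀ j : J, ¬IsMax j → W (F.map (homOfLE (Order.le_succ j)))) →
    (∀ j : J, Order.IsSuccLimit j → Nonempty (IsColimit (coconeAt F j))) →
    W (c.ι.app ⊥)

/-- A class of morphisms is saturated if it contains all isomorphisms and is closed
under composition, retracts, pushouts (cobase change) and transfinite composition. -/
structure IsSaturated (W : MorphismProperty C) : Prop where
  of_isIso : ∀ {X Y : C} (f : X ⟶ Y), IsIso f → W f
  comp_mem : ∀ {X Y Z : C} (f : X ⟶ Y) (g : Y ⟶ Z), W f → W g → W (f ≫ g)
  retract_mem : ∀ {X Y Z Z' : C} (f : X ⟶ Y) (g : Z ⟶ Z'),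
    IsRetractOfArrow f g → W g → W f
  pushout_mem : ∀ {A A' B B' : C} (f : A ⟶ B) (t : A ⟶ A') (f' : A' ⟶ B') (b : B ⟶ B'),
    IsPushout t f f' b → W f → W f'
  transfinite : ClosedUnderTransfiniteComposition.{w} W

/-- A class of morphisms is cosaturated if the corresponding class in the opposite
category is saturated, i.e. it contains all isomorphisms and is closed under
composition, retracts, pullbacks (base change) and transfinite op-composition. -/
def IsCosaturated (W : MorphismProperty C) : Prop :=
  IsSaturated.{w} W.op

/-- The saturated closure (saturation) of a class of morphisms: the smallest saturated
class containing it. -/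
def saturation (A : MorphismProperty C) : MorphismProperty C :=
  fun _ _ f => ∀ W : MorphismProperty C, IsSaturated.{w} W → A ≤ W → W f

/-- The cosaturated closure (cosaturation) of a class of morphisms: the smallest
cosaturated class containing it. -/
def cosaturation (A : MorphismProperty C) : MorphismProperty C :=
  fun _ _ f => ∀ W : MorphismProperty C, IsCosaturated.{w} W → A ≤ W → W f

/-- A weak factorization system `(E, M)`: every morphism factors as a morphism of `E`
followed by a morphism of `M`, `E` is precisely the class of morphisms with the left
lifting property against `M`, and `M` is precisely the class of morphisms with the
right lifting property against `E`. -/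
structure IsWFS (E M : MorphismProperty C) : Prop where
  factor : ∀ {X Y : C} (f : X ⟶ Y),
    ∃ (Z : C) (e : X ⟶ Z) (m : Z ⟶ Y), E e ∧ M m ∧ e ≫ m = f
  left_iff : ∀ {X Y : C} (f : X ⟶ Y),
    E f ↔ ∀ {V W : C} (m : V ⟶ W), M m → HasLiftingProperty f m
  right_iff : ∀ {X Y : C} (m : X ⟶ Y),
    M m ↔ ∀ {V W : C} (e : V ⟶ W), E e → HasLiftingProperty e m

end Saturation

namespace THC

variable {𝔸 : Type u₁} {𝕊 : Type u₂} {𝔹 : Type u₃}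
  [Category.{v₁} 𝔸] [Category.{v₂} 𝕊] [Category.{v₃} 𝔹]

/-- The tensor–hom half of a two-variable adjunction, as an adjunction with parameter in `𝕊`. -/
def tensorHomAdjunction (T : THC 𝔸 𝕊 𝔹) : T.tensor.flip ⊣₂ T.hom :=
  ParametrizedAdjunction.mk'
    (fun s => Adjunction.mkOfHomEquiv
      { homEquiv := fun a b => T.homEquiv a s b
        homEquiv_naturality_left_symm := fun h φ => by
          rw [Equiv.symm_apply_eq]
          exact ((T.homEquiv_naturality_left h s _ _).trans (by simp)).symm
        homEquiv_naturality_right := fun φ k => T.homEquiv_naturality_right _ s k φ })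
    (fun w _ _ φ => by
      simpa using T.homEquiv_naturality_mid _ w _ φ)

/-- The Leibniz tensor `f ⋄ u`, presented as the pushout-product of `u` and `f` for the flipped
tensor: the two legs of the pushout are interchanged. -/
noncomputable def leibnizTensorPushout (T : THC 𝔸 𝕊 𝔹) [HasPushouts 𝔹]
    {A B : 𝔸} (f : A ⟶ B) {L K : 𝕊} (u : L ⟶ K) :
    T.tensor.flip.PushoutObjObj u f where
  pt := pushout ((T.tensor.map f).app L) ((T.tensor.obj A).map u)
  inl := pushout.inr _ _
  inr := pushout.inl _ _
  isPushout := (IsPushout.of_hasPushout _ _).flip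
  ι := T.leibnizTensor f u
  inl_ι := pushout.inr_desc _ _ _
  inr_ι := pushout.inl_desc _ _ _

theorem hasLiftingProperty_leibnizTensor_iff (T : THC 𝔸 𝕊 𝔹) [HasPushouts 𝔹] [HasPullbacks 𝔸]
    {A B : 𝔸} (f : A ⟶ B) {L K : 𝕊} (u : L ⟶ K) {X Y : 𝔹} (m : X ⟶ Y) :
    HasLiftingProperty (T.leibnizTensor f u) m ↔ HasLiftingProperty f (T.leibnizHom u m) :=
  T.tensorHomAdjunction.hasLiftingProperty_iff (T.leibnizTensorPushout f u)
    (Functor.PullbackObjObj.ofHasPullback T.hom u m)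

/-- The class of Leibniz homs `⟪u, m⟫` with `u` fixed and `m` ranging over `M`. -/
inductive leibnizHoms (T : THC 𝔸 𝕊 𝔹) [HasPullbacks 𝔸] (M : MorphismProperty 𝔹)
    {L K : 𝕊} (u : L ⟶ K) : MorphismProperty 𝔸
  | mk {X Y : 𝔹} (m : X ⟶ Y) (hm : M m) : leibnizHoms T M u (T.leibnizHom u m)

end THC

theorem isSaturated_llp {C : Type u₁} [Category.{v₁} C] (R : MorphismProperty C) :
    IsSaturated.{w} R.llp where
  of_isIso f _ := R.llp_of_isIso f
  comp_mem f g hf hg := R.llp.comp_mem f g hf hg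
  retract_mem f g h hg := by
    obtain ⟨i, r, j, s, hir, hjs, hi, hr⟩ := h
    exact MorphismProperty.of_retract (P := R.llp)
      { i := Arrow.homMk i j hi
        r := Arrow.homMk r s hr.symm
        retract := by ext <;> simpa } hg
  pushout_mem f t f' b h hf := MorphismProperty.of_isPushout (P := R.llp) h hf
  transfinite := by
    intro J _ _ _ _ F c hc hsucc hlim _ _ p hp
    have : F.IsWellOrderContinuous := ⟨fun j hj => hlim j hj⟩
    exact HasLiftingProperty.transfiniteComposition.hasLiftingProperty_ι_app_bot hc
      (fun j hj => hsucc j hj p hp)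

/-- Let `(E, M)` be a weak factorization system on `𝔹`. If the Leibniz
tensor `f ⋄ u` belongs to `E` for all `f ∈ 𝒜` and `u ∈ 𝒮`, then `f ⋄ u` belongs to `E`
for all `f` in the saturated closure `𝒜ˢ` and all `u ∈ 𝒮` (saturating only the first
class). -/
theorem thc_wfs_saturation_tensor_left {𝔸 : Type u₁} {𝕊 : Type u₂} {𝔹 : Type u₃}
    [Category.{v₁} 𝔸] [Category.{v₂} 𝕊] [Category.{v₃} 𝔹]
    (T : THC 𝔸 𝕊 𝔹) [HasPushouts 𝔹] [HasPullbacks 𝔸] [HasPullbacks 𝕊] [HasColimits 𝔸]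
    (E M : MorphismProperty 𝔹) (hwfs : IsWFS E M)
    (𝒜 : MorphismProperty 𝔸) (𝒮 : MorphismProperty 𝕊)
    (h : ∀ {A B : 𝔸} (f : A ⟶ B) {L K : 𝕊} (u : L ⟶ K),
      𝒜 f → 𝒮 u → E (T.leibnizTensor f u)) :
    ∀ {A B : 𝔸} (f : A ⟶ B) {L K : 𝕊} (u : L ⟶ K),
      saturation.{w} 𝒜 f → 𝒮 u → E (T.leibnizTensor f u) := by
  intro A B f L K u hf hu
  have hle : 𝒜 ≤ (T.leibnizHoms M u).llp := by
    rintro A' B' f' hf' _ _ _ ⟨m, hm⟩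
    exact (T.hasLiftingProperty_leibnizTensor_iff f' u m).1
      ((hwfs.left_iff _).1 (h f' u hf' hu) m hm)
  refine (hwfs.left_iff _).2 fun m hm => ?_
  exact (T.hasLiftingProperty_leibnizTensor_iff f u m).2
    (hf _ (isSaturated_llp _) hle _ ⟨m, hm⟩)
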